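/- Every algebraic curvature tensor R ∈ ℛ(co(1,n+1)_{ℝp}) is uniquely determined by data μ, λ ∈ ℝ, X₀, Z₀ ∈ ℝⁿ, a linear map γ : ℝⁿ → ℝ, P ∈ 𝒫(so(n)), a symmetric endomorphism K of ℝⁿ, and linear maps S : Λ²ℝⁿ → so(n), τ : Λ²ℝⁿ → ℝ with S + τ·id_{ℝⁿ} ∈ ℛ(co(n)), via the equalities R(p,q) = (μ, λ, A₀, X₀), R(p,V) = ((Z₀,V), (Z₀,V), Z₀∧V, −(A₀ + μ·id_{ℝⁿ})V), R(U,V) = ((A₀U,V), (A₀U,V), S(U,V), L(U,V)), R(U,q) = (γ(U), (U,X₀) − γ(U), P(U), K(U)) for all U, V ∈ ℝⁿ, where A₀ ∈ so(n) is defined by τ(U,V) = (A₀U,V) and L(U,V) := P(V)U + γ(V)U − P(U)V − γ(U)V. Conversely, every such collection of data defines by these formulas an element of ℛ(co(1,n+1)_{ℝp}); the correspondence is a linear bijection. -/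

import Mathlib

open Module

noncomputable section

namespace Weyl

variable {V : Type*} [AddCommGroup V] [Module ℝ V]

/-- The endomorphism `X ∧ Y : Z ↦ B(X,Z)•Y − B(Y,Z)•X`. -/
def wedge (B : LinearMap.BilinForm ℝ V) (X Y : V) : Module.End ℝ V where
  toFun Z := B X Z • Y - B Y Z • X
  map_add' z z' := by simp only [map_add, add_smul]; abel
  map_smul' c z := by simp only [map_smul, smul_eq_mul, RingHom.id_apply, mul_smul, smul_sub]

/-- The Lie algebra `so(B)` of endomorphisms skew-symmetric with respect to `B`. -/
def soSet (B : LinearMap.BilinForm ℝ V) : Set (Module.End ℝ V) :=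
  {A | ∀ x y, B (A x) y + B x (A y) = 0}

/-- The conformal Lie algebra `co(B) = ℝ·id ⊕ so(B)`. -/
def coSet (B : LinearMap.BilinForm ℝ V) : Set (Module.End ℝ V) :=
  {F | ∃ c : ℝ, ∃ S ∈ soSet B, F = c • (1 : Module.End ℝ V) + S}

/-- The first prolongation `g^{(1)}` of a set of endomorphisms:
linear maps `φ : V → g` with `φ(X)Y = φ(Y)X`. -/
def firstProlong (g : Set (Module.End ℝ V)) : Set (V →ₗ[ℝ] Module.End ℝ V) :=
  {φ | (∀ x, φ x ∈ g) ∧ ∀ x y, φ x y = φ y x}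

/-- `R` is an algebraic curvature tensor of type `g` (a linear map on `Λ²V`,
encoded as an antisymmetric bilinear map, with values in `g`, satisfying the
Bianchi identity). -/
def IsCurv (g : Set (Module.End ℝ V)) (R : V →ₗ[ℝ] V →ₗ[ℝ] Module.End ℝ V) : Prop :=
  (∀ x y, R x y = - R y x) ∧ (∀ x y, R x y ∈ g) ∧
    ∀ x y z, R x y z + R y z x + R z x y = 0

/-- `L(ℛ(g))`: the span of all values of algebraic curvature tensors of type `g`. -/
def curvSpan (g : Set (Module.End ℝ V)) : Submodule ℝ (Module.End ℝ V) :=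
  Submodule.span ℝ {F | ∃ R, IsCurv g R ∧ ∃ x y, F = R x y}

/-- `g` is a Berger algebra: `L(ℛ(g)) = g`. -/
def IsBerger (g : Set (Module.End ℝ V)) : Prop :=
  (curvSpan g : Set (Module.End ℝ V)) = g

/-- `g` is (the underlying set of) a Lie subalgebra of `gl(V)`. -/
def IsLieSub (g : Set (Module.End ℝ V)) : Prop :=
  (0 : Module.End ℝ V) ∈ g ∧ (∀ F ∈ g, ∀ F' ∈ g, F + F' ∈ g) ∧
    (∀ (c : ℝ), ∀ F ∈ g, c • F ∈ g) ∧ ∀ F ∈ g, ∀ F' ∈ g, F * F' - F' * F ∈ g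

/-- The subspace `W` is invariant under every element of `g`. -/
def Invariant (g : Set (Module.End ℝ V)) (W : Submodule ℝ V) : Prop :=
  ∀ F ∈ g, ∀ x ∈ W, F x ∈ W

/-- The restriction of `B` to `W` is nondegenerate. -/
def IsNondegOn (B : LinearMap.BilinForm ℝ V) (W : Submodule ℝ V) : Prop :=
  ∀ x ∈ W, (∀ y ∈ W, B x y = 0) → x = 0

/-- Weak irreducibility: no proper nonzero invariant nondegenerate subspace. -/
def WeaklyIrred (B : LinearMap.BilinForm ℝ V) (g : Set (Module.End ℝ V)) : Prop :=
  ∀ W : Submodule ℝ V, Invariant g W → IsNondegOn B W → W = ⊥ ∨ W = ⊤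

/-- Irreducibility: no proper nonzero invariant subspace. -/
def Irred (g : Set (Module.End ℝ V)) : Prop :=
  ∀ W : Submodule ℝ V, Invariant g W → W = ⊥ ∨ W = ⊤

/-- The Euclidean dot product on `Fin n → ℝ`. -/
def dotE (n : ℕ) : LinearMap.BilinForm ℝ (Fin n → ℝ) :=
  LinearMap.mk₂ ℝ (fun x y => ∑ i, x i * y i)
    (fun x x' y => by simp [add_mul, Finset.sum_add_distrib])
    (fun c x y => by simp [Finset.mul_sum, mul_assoc])
    (fun x y y' => by simp [mul_add, Finset.sum_add_distrib])
    (fun c x y => by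
      simp only [Pi.smul_apply, smul_eq_mul, Finset.mul_sum]
      exact Finset.sum_congr rfl fun i _ => by ring)

/-- Minkowski space `ℝ^{1,n+1}` in Witt coordinates: the vector `(v, x, u)`
represents `v·p + x + u·q` with respect to a Witt basis `p, e₁, …, eₙ, q`. -/
abbrev Mink (n : ℕ) := ℝ × (Fin n → ℝ) × ℝ

/-- The Minkowski metric in Witt coordinates: `p, q` are isotropic, `(p,q) = 1`,
and the form is the Euclidean one on the `ℝⁿ`-part orthogonal to `p` and `q`. -/
def minkB (n : ℕ) : LinearMap.BilinForm ℝ (Mink n) :=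
  LinearMap.mk₂ ℝ (fun X Y => X.1 * Y.2.2 + X.2.2 * Y.1 + dotE n X.2.1 Y.2.1)
    (fun X X' Y => by
      simp only [Prod.fst_add, Prod.snd_add, Pi.add_apply, map_add,
        LinearMap.add_apply]
      ring)
    (fun c X Y => by
      simp only [Prod.smul_fst, Prod.smul_snd, smul_eq_mul, map_smul,
        LinearMap.smul_apply]
      ring)
    (fun X Y Y' => by
      simp only [Prod.fst_add, Prod.snd_add, Pi.add_apply, map_add,
        LinearMap.add_apply]
      ring)
    (fun c X Y => by
      simp only [Prod.smul_fst, Prod.smul_snd, smul_eq_mul, map_smul,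
        LinearMap.smul_apply]
      ring)

/-- The Witt basis vector `p`. -/
def pvec (n : ℕ) : Mink n := (1, 0, 0)

/-- The Witt basis vector `q`. -/
def qvec (n : ℕ) : Mink n := (0, 0, 1)

/-- The embedding of `ℝⁿ` into Minkowski space. -/
def emb {n : ℕ} (x : Fin n → ℝ) : Mink n := (0, x, 0)

/-- The element `(b, a, A, X) = b·id + (a, A, X)` of `co(1,n+1)_{ℝp}`:
it maps `p ↦ (a+b)·p`, `U ↦ (X,U)·p + A U + b·U` for `U ∈ ℝⁿ`, and
`q ↦ −X + (b−a)·q`. -/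
def coElem {n : ℕ} (b a : ℝ) (A : Module.End ℝ (Fin n → ℝ)) (X : Fin n → ℝ) :
    Module.End ℝ (Mink n) where
  toFun w := ((b + a) * w.1 + dotE n X w.2.1,
              b • w.2.1 + A w.2.1 - w.2.2 • X,
              (b - a) * w.2.2)
  map_add' w w' := by
    simp only [Prod.fst_add, Prod.snd_add, map_add, Prod.mk_add_mk, add_smul]
    refine Prod.ext (by ring) (Prod.ext ?_ (by ring))
    simp only [smul_add]
    abel
  map_smul' c w := by
    simp only [Prod.smul_fst, Prod.smul_snd, smul_eq_mul, map_smul,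
      RingHom.id_apply, Prod.smul_mk]
    refine Prod.ext (by simp; ring) (Prod.ext ?_ (by simp; ring))
    simp only [smul_smul, smul_sub, LinearMap.map_smul]
    rw [mul_comm]
    module

/-- The Lie algebra `so(n)` of skew-symmetric endomorphisms of Euclidean `ℝⁿ`. -/
def soE (n : ℕ) : Set (Module.End ℝ (Fin n → ℝ)) := soSet (dotE n)

/-- The subalgebra `co(1,n+1)_{ℝp}` of `co(1,n+1)` preserving the isotropic line `ℝp`,
whose elements are written `(b, a, A, X)`. -/
def coRp (n : ℕ) : Set (Module.End ℝ (Mink n)) :=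
  {F | ∃ b a : ℝ, ∃ A ∈ soE n, ∃ X : Fin n → ℝ, F = coElem b a A X}

/-- The data determining an algebraic curvature tensor of type `co(1,n+1)_{ℝp}`. -/
structure CurvData (n : ℕ) where
  mu : ℝ
  lam : ℝ
  X0 : Fin n → ℝ
  Z0 : Fin n → ℝ
  gam : (Fin n → ℝ) →ₗ[ℝ] ℝ
  P : (Fin n → ℝ) →ₗ[ℝ] Module.End ℝ (Fin n → ℝ)
  K : Module.End ℝ (Fin n → ℝ)
  A0 : Module.End ℝ (Fin n → ℝ)
  S : (Fin n → ℝ) →ₗ[ℝ] (Fin n → ℝ) →ₗ[ℝ] Module.End ℝ (Fin n → ℝ)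
  tau : (Fin n → ℝ) →ₗ[ℝ] (Fin n → ℝ) →ₗ[ℝ] ℝ

/-- The side conditions on the data: `P ∈ 𝒫(so(n))`, `K` symmetric, `S`, `τ`
antisymmetric with `S + τ·id ∈ ℛ(co(n))` (Bianchi identity), and `A₀ ∈ so(n)`
defined by `τ(U,V) = (A₀U, V)`. -/
def ValidData {n : ℕ} (d : CurvData n) : Prop :=
  (∀ U, d.P U ∈ soE n) ∧
  (∀ x y z, dotE n (d.P x y) z + dotE n (d.P y z) x + dotE n (d.P z x) y = 0) ∧
  (∀ x y, dotE n (d.K x) y = dotE n x (d.K y)) ∧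
  (∀ x y, d.S x y = - d.S y x) ∧ (∀ x y, d.S x y ∈ soE n) ∧
  (∀ x y, d.tau x y = - d.tau y x) ∧
  (∀ x y z, (d.S x y z + d.tau x y • z) + (d.S y z x + d.tau y z • x) +
      (d.S z x y + d.tau z x • y) = 0) ∧
  d.A0 ∈ soE n ∧ (∀ U W, d.tau U W = dotE n (d.A0 U) W)

/-- `L(U,V) = P(V)U + γ(V)U − P(U)V − γ(U)V`. -/
def Lmap {n : ℕ} (d : CurvData n) (U W : Fin n → ℝ) : Fin n → ℝ :=
  d.P W U + d.gam W • U - d.P U W - d.gam U • W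

/-- The curvature tensor `R` is given by the data `d` via the four defining
equalities of Theorem 6 (Galaev's parametrization). -/
def Matches {n : ℕ} (R : Mink n →ₗ[ℝ] Mink n →ₗ[ℝ] Module.End ℝ (Mink n))
    (d : CurvData n) : Prop :=
  R (pvec n) (qvec n) = coElem d.mu d.lam d.A0 d.X0 ∧
  (∀ W : Fin n → ℝ, R (pvec n) (emb W) =
    coElem (dotE n d.Z0 W) (dotE n d.Z0 W) (wedge (dotE n) d.Z0 W)
      (-(d.A0 W + d.mu • W))) ∧
  (∀ U W : Fin n → ℝ, R (emb U) (emb W) =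
    coElem (dotE n (d.A0 U) W) (dotE n (d.A0 U) W) (d.S U W) (Lmap d U W)) ∧
  (∀ U : Fin n → ℝ, R (emb U) (qvec n) =
    coElem (d.gam U) (dotE n U d.X0 - d.gam U) (d.P U) (d.K U))

/-!
An antisymmetric bilinear map `R` on Minkowski space is determined by its values on the pairs
`(p, q)`, `(p, W)`, `(U, W)` and `(U, q)` with `U, W ∈ ℝⁿ`, and its Bianchi identity, being
alternating in three vectors, only has to be tested on `(p, q, W)`, `(p, U, W)`, `(U, W, q)` and
`(U, W, T)`. Writing the values of `R` as `(b, a, A, X)` turns these four tests into equations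
between components. They express `R` through the data, and what is left of them are exactly the
conditions on `P`, `K` and `S + τ·id`. The only step which is not a comparison of components is
that `A = Z₀ ∧ W` in `R(p, W) = (b, a, A, X)`: it holds because `so(n)` has trivial first
prolongation.
-/

section BilinForm

variable {B : LinearMap.BilinForm ℝ V}

theorem mem_soSet_iff_mem_skewAdjointSubmodule {A : Module.End ℝ V} :
    A ∈ soSet B ↔ A ∈ B.skewAdjointSubmodule := by
  simp only [soSet, Set.mem_ofPred_eq, LinearMap.mem_skewAdjointSubmodule,
    LinearMap.IsSkewAdjoint, LinearMap.IsAdjointPair, Pi.neg_apply, map_neg,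
    add_eq_zero_iff_eq_neg]

theorem mem_soSet_iff_of_isSymm (hB : B.IsSymm) {A : Module.End ℝ V} :
    A ∈ soSet B ↔ ∀ x y, B (A x) y = -B (A y) x := by
  simp only [soSet, Set.mem_ofPred_eq, add_eq_zero_iff_eq_neg, hB.eq _ (A _)]

theorem wedge_apply (B : LinearMap.BilinForm ℝ V) (X Y Z : V) :
    wedge B X Y Z = B X Z • Y - B Y Z • X := rfl

/-- The wedge product `Y ↦ X ∧ Y` as a linear map in its second argument. -/
def wedgeRight (B : LinearMap.BilinForm ℝ V) (X : V) : V →ₗ[ℝ] Module.End ℝ V where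
  toFun := wedge B X
  map_add' Y Y' := by
    ext Z
    simp only [wedge_apply, map_add, LinearMap.add_apply]
    module
  map_smul' c Y := by
    ext Z
    simp only [wedge_apply, map_smul, LinearMap.smul_apply, smul_eq_mul, RingHom.id_apply]
    module

theorem wedge_mem_soSet (hB : B.IsSymm) (X Y : V) : wedge B X Y ∈ soSet B := by
  rw [mem_soSet_iff_of_isSymm hB]
  intro x y
  simp only [wedge_apply, map_sub, map_smul, LinearMap.sub_apply, LinearMap.smul_apply,
    smul_eq_mul]
  ring

theorem smul_add_wedge_comm (hB : B.IsSymm) (X Y Z : V) :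
    B X Y • Z + wedge B X Y Z = B X Z • Y + wedge B X Z Y := by
  rw [wedge_apply, wedge_apply, hB.eq Y Z]
  module

-- The trilinear form `B (φ x y) z` is symmetric in `x, y` and skew in `y, z`, hence zero.
theorem eq_zero_of_mem_firstProlong_soSet (hB : B.IsSymm) (hB' : B.SeparatingLeft)
    {φ : V →ₗ[ℝ] Module.End ℝ V} (hφ : φ ∈ firstProlong (soSet B)) : φ = 0 := by
  obtain ⟨hso, hsymm⟩ := hφ
  have hskew (x y z : V) : B (φ x y) z = -B (φ x z) y :=
    (mem_soSet_iff_of_isSymm hB).mp (hso x) y z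
  ext x y
  refine hB' _ fun z => ?_
  have hcycle : B (φ x y) z = -B (φ x y) z := by
    calc B (φ x y) z = -B (φ z x) y := by rw [hskew, hsymm]
      _ = B (φ y z) x := by rw [hskew, hsymm, neg_neg]
      _ = -B (φ x y) z := by rw [hskew, hsymm]
  linarith

end BilinForm

section Euclidean

variable {n : ℕ}

theorem dotE_isSymm (n : ℕ) : (dotE n).IsSymm := ⟨dotProduct_comm⟩

theorem dotE_separatingLeft (n : ℕ) : (dotE n).SeparatingLeft := dotProduct_eq_zero

theorem dotE_injective (n : ℕ) : Function.Injective (dotE n) := fun x y h =>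
  dotProduct_eq x y (LinearMap.congr_fun h)

theorem dotE_dotProductEquiv_symm (f : (Fin n → ℝ) →ₗ[ℝ] ℝ) :
    dotE n ((dotProductEquiv ℝ (Fin n)).symm f) = f :=
  (dotProductEquiv ℝ (Fin n)).apply_symm_apply f

theorem mem_soE_iff {A : Module.End ℝ (Fin n → ℝ)} :
    A ∈ soE n ↔ ∀ x y, dotE n (A x) y = -dotE n (A y) x :=
  mem_soSet_iff_of_isSymm (dotE_isSymm n)

end Euclidean

section CoElem

variable {n : ℕ} {b a b' a' b₁ a₁ b₂ a₂ b₃ a₃ : ℝ}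
  {A A' A₁ A₂ A₃ : Module.End ℝ (Fin n → ℝ)} {X X' X₁ X₂ X₃ U W T : Fin n → ℝ}

theorem coElem_apply (w : Mink n) :
    coElem b a A X w = ((b + a) * w.1 + dotE n X w.2.1,
      b • w.2.1 + A w.2.1 - w.2.2 • X, (b - a) * w.2.2) := rfl

theorem coElem_pvec : coElem b a A X (pvec n) = (b + a, 0, 0) := by
  simp [coElem_apply, pvec]

theorem coElem_emb : coElem b a A X (emb U) = (dotE n X U, b • U + A U, 0) := by
  simp [coElem_apply, emb]

theorem coElem_qvec : coElem b a A X (qvec n) = (0, -X, b - a) := by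
  simp [coElem_apply, qvec]

theorem coElem_add :
    coElem b a A X + coElem b' a' A' X' = coElem (b + b') (a + a') (A + A') (X + X') := by
  refine LinearMap.ext fun w => Prod.ext ?_ (Prod.ext ?_ ?_) <;>
    simp only [LinearMap.add_apply, coElem_apply, Prod.fst_add, Prod.snd_add, map_add]
  · ring
  · module
  · ring

theorem coElem_smul (c : ℝ) :
    c • coElem b a A X = coElem (c * b) (c * a) (c • A) (c • X) := by
  refine LinearMap.ext fun w => Prod.ext ?_ (Prod.ext ?_ ?_) <;>
    simp only [LinearMap.smul_apply, coElem_apply, Prod.smul_fst, Prod.smul_snd, map_smul,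
      smul_eq_mul]
  · ring
  · module
  · ring

theorem coElem_neg : -coElem b a A X = coElem (-b) (-a) (-A) (-X) := by
  have hA : (-1 : ℝ) • A = -A := by module
  rw [← neg_one_smul ℝ, coElem_smul, neg_one_mul, neg_one_mul, hA, neg_one_smul]

/-- The component `b` of `(b, a, A, X)`, as a linear functional on `End ℝ^{1,n+1}`. -/
def coScale (n : ℕ) : Module.End ℝ (Mink n) →ₗ[ℝ] ℝ where
  toFun F := ((F (pvec n)).1 + (F (qvec n)).2.2) / 2
  map_add' F G := by
    simp only [LinearMap.add_apply, Prod.fst_add, Prod.snd_add]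
    ring
  map_smul' c F := by
    simp only [LinearMap.smul_apply, Prod.smul_fst, Prod.smul_snd, smul_eq_mul, RingHom.id_apply]
    ring

/-- The component `a` of `(b, a, A, X)`, as a linear functional on `End ℝ^{1,n+1}`. -/
def coBoost (n : ℕ) : Module.End ℝ (Mink n) →ₗ[ℝ] ℝ where
  toFun F := ((F (pvec n)).1 - (F (qvec n)).2.2) / 2
  map_add' F G := by
    simp only [LinearMap.add_apply, Prod.fst_add, Prod.snd_add]
    ring
  map_smul' c F := by
    simp only [LinearMap.smul_apply, Prod.smul_fst, Prod.smul_snd, smul_eq_mul, RingHom.id_apply]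
    ring

/-- The embedding of `ℝⁿ` into Minkowski space as a linear map. -/
def embₗ (n : ℕ) : (Fin n → ℝ) →ₗ[ℝ] Mink n :=
  LinearMap.inr ℝ ℝ ((Fin n → ℝ) × ℝ) ∘ₗ LinearMap.inl ℝ (Fin n → ℝ) ℝ

theorem embₗ_apply (U : Fin n → ℝ) : embₗ n U = emb U := rfl

/-- The component `A` of `(b, a, A, X)`, as a linear map on `End ℝ^{1,n+1}`: the `ℝⁿ`-block of
`F` with its scale part removed. -/
def coRot (n : ℕ) : Module.End ℝ (Mink n) →ₗ[ℝ] Module.End ℝ (Fin n → ℝ) where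
  toFun F := LinearMap.fst ℝ _ _ ∘ₗ LinearMap.snd ℝ _ _ ∘ₗ F ∘ₗ embₗ n - coScale n F • 1
  map_add' F G := by
    rw [LinearMap.add_comp, LinearMap.comp_add, LinearMap.comp_add, map_add]
    module
  map_smul' c F := by
    rw [LinearMap.smul_comp, LinearMap.comp_smul, LinearMap.comp_smul, map_smul, smul_eq_mul,
      RingHom.id_apply]
    module

/-- The component `X` of `(b, a, A, X)`, as a linear map on `End ℝ^{1,n+1}`. -/
def coTrans (n : ℕ) : Module.End ℝ (Mink n) →ₗ[ℝ] (Fin n → ℝ) where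
  toFun F := -(F (qvec n)).2.1
  map_add' F G := by simp only [LinearMap.add_apply, Prod.snd_add, Prod.fst_add, neg_add]
  map_smul' c F := by
    simp only [LinearMap.smul_apply, Prod.smul_snd, Prod.smul_fst, smul_neg, RingHom.id_apply]

theorem coScale_coElem : coScale n (coElem b a A X) = b := by
  simp [coScale, coElem_pvec, coElem_qvec]

theorem coBoost_coElem : coBoost n (coElem b a A X) = a := by
  simp [coBoost, coElem_pvec, coElem_qvec]

theorem coRot_coElem : coRot n (coElem b a A X) = A := by
  refine LinearMap.ext fun U => ?_
  simp [coRot, embₗ_apply, coElem_emb, coScale_coElem]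

theorem coTrans_coElem : coTrans n (coElem b a A X) = X := by
  simp [coTrans, coElem_qvec]

theorem coElem_inj :
    coElem b a A X = coElem b' a' A' X' ↔ b = b' ∧ a = a' ∧ A = A' ∧ X = X' := by
  refine ⟨fun h => ⟨?_, ?_, ?_, ?_⟩, by rintro ⟨rfl, rfl, rfl, rfl⟩; rfl⟩
  · simpa only [coScale_coElem] using congrArg (coScale n) h
  · simpa only [coBoost_coElem] using congrArg (coBoost n) h
  · simpa only [coRot_coElem] using congrArg (coRot n) h
  · simpa only [coTrans_coElem] using congrArg (coTrans n) h

theorem coElem_mem_coRp : coElem b a A X ∈ coRp n ↔ A ∈ soE n := by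
  refine ⟨?_, fun hA => ⟨b, a, A, hA, X, rfl⟩⟩
  rintro ⟨b', a', A', hA', X', h⟩
  rwa [(coElem_inj.mp h).2.2.1]

theorem eq_coElem_of_mem_coRp {F : Module.End ℝ (Mink n)} (hF : F ∈ coRp n) :
    F = coElem (coScale n F) (coBoost n F) (coRot n F) (coTrans n F) := by
  obtain ⟨b, a, A, -, X, rfl⟩ := hF
  rw [coScale_coElem, coBoost_coElem, coRot_coElem, coTrans_coElem]

theorem coRot_mem_soE {F : Module.End ℝ (Mink n)} (hF : F ∈ coRp n) : coRot n F ∈ soE n := by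
  rwa [eq_coElem_of_mem_coRp hF, coElem_mem_coRp] at hF

/-- The Lie algebra `co(1,n+1)_{ℝp}` as a linear subspace of `End ℝ^{1,n+1}`. -/
def coRpSubmodule (n : ℕ) : Submodule ℝ (Module.End ℝ (Mink n)) where
  carrier := coRp n
  add_mem' := by
    rintro _ _ ⟨b, a, A, hA, X, rfl⟩ ⟨b', a', A', hA', X', rfl⟩
    have hso := mem_soSet_iff_mem_skewAdjointSubmodule.mpr <| add_mem
      (mem_soSet_iff_mem_skewAdjointSubmodule.mp hA)
      (mem_soSet_iff_mem_skewAdjointSubmodule.mp hA')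
    exact ⟨_, _, _, hso, _, coElem_add⟩
  zero_mem' := ⟨0, 0, 0, mem_soSet_iff_mem_skewAdjointSubmodule.mpr (zero_mem _), 0,
    LinearMap.ext fun w => by simp [coElem_apply, Prod.ext_iff]⟩
  smul_mem' := by
    rintro c _ ⟨b, a, A, hA, X, rfl⟩
    have hso := mem_soSet_iff_mem_skewAdjointSubmodule.mpr <|
      Submodule.smul_mem _ c (mem_soSet_iff_mem_skewAdjointSubmodule.mp hA)
    exact ⟨_, _, _, hso, _, coElem_smul c⟩

theorem mem_coRpSubmodule {F : Module.End ℝ (Mink n)} : F ∈ coRpSubmodule n ↔ F ∈ coRp n :=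
  Iff.rfl

theorem coElem_emb_eq_iff :
    coElem b a A X (emb W) = coElem b₁ a₁ A₁ X₁ (pvec n) + coElem b₂ a₂ A₂ X₂ (qvec n) ↔
      dotE n X W = b₁ + a₁ ∧ X₂ = -(A W + b • W) ∧ a₂ = b₂ := by
  simp only [coElem_emb, coElem_pvec, coElem_qvec, Prod.mk_add_mk, Prod.mk.injEq, add_zero,
    zero_add, eq_comm (a := (0 : ℝ)), sub_eq_zero, eq_comm (a := a₂), add_comm (A W),
    ← neg_eq_iff_eq_neg, eq_comm (b := -X₂)]

theorem coElem_pvec_eq_iff :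
    coElem b a A X (pvec n) = coElem b₁ a₁ A₁ X₁ (emb U) - coElem b₂ a₂ A₂ X₂ (emb W) ↔
      b + a = dotE n X₁ U - dotE n X₂ W ∧ b₁ • U + A₁ U = b₂ • W + A₂ W := by
  simp only [coElem_emb, coElem_pvec, Prod.mk_sub_mk, Prod.mk.injEq, sub_self, and_true,
    eq_comm (a := (0 : Fin n → ℝ)), sub_eq_zero]

theorem coElem_qvec_eq_iff :
    coElem b a A X (qvec n) = coElem b₁ a₁ A₁ X₁ (emb U) - coElem b₂ a₂ A₂ X₂ (emb W) ↔
      dotE n X₁ U = dotE n X₂ W ∧ X = b₂ • W + A₂ W - (b₁ • U + A₁ U) ∧ a = b := by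
  simp only [coElem_emb, coElem_qvec, Prod.mk_sub_mk, Prod.mk.injEq, sub_self, sub_eq_zero,
    eq_comm (a := (0 : ℝ)), neg_eq_iff_eq_neg, neg_sub, eq_comm (a := b)]

theorem coElem_emb_add_add_eq_zero_iff :
    coElem b₁ a₁ A₁ X₁ (emb U) + coElem b₂ a₂ A₂ X₂ (emb W) + coElem b₃ a₃ A₃ X₃ (emb T) = 0 ↔
      dotE n X₁ U + dotE n X₂ W + dotE n X₃ T = 0 ∧
        (A₁ U + b₁ • U) + (A₂ W + b₂ • W) + (A₃ T + b₃ • T) = 0 := by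
  simp only [coElem_emb, Prod.mk_add_mk, Prod.mk_eq_zero, add_zero, and_true, add_comm (A₁ U),
    add_comm (A₂ W), add_comm (A₃ T)]

end CoElem

section WittDecomposition

variable {n : ℕ} {M : Type*} [AddCommGroup M] [Module ℝ M]

theorem eq_smul_pvec_add_emb_add_smul_qvec (x : Mink n) :
    x = x.1 • pvec n + emb x.2.1 + x.2.2 • qvec n := by
  simp [pvec, qvec, emb]

theorem apply_self_eq_zero_of_antisymm {R : V →ₗ[ℝ] V →ₗ[ℝ] M}
    (hR : ∀ x y, R x y = -R y x) (x : V) : R x x = 0 := by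
  have : IsAddTorsionFree M := .of_isTorsionFree ℝ M
  exact self_eq_neg.mp (hR x x)

theorem apply_eq_witt {R : Mink n →ₗ[ℝ] Mink n →ₗ[ℝ] M} (hR : ∀ x y, R x y = -R y x)
    (x y : Mink n) :
    R x y = (x.1 * y.2.2 - x.2.2 * y.1) • R (pvec n) (qvec n) +
      (x.1 • R (pvec n) (emb y.2.1) - y.1 • R (pvec n) (emb x.2.1)) +
      R (emb x.2.1) (emb y.2.1) +
      (y.2.2 • R (emb x.2.1) (qvec n) - x.2.2 • R (emb y.2.1) (qvec n)) := by
  conv_lhs =>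
    rw [eq_smul_pvec_add_emb_add_smul_qvec x, eq_smul_pvec_add_emb_add_smul_qvec y]
  simp only [map_add, map_smul, LinearMap.add_apply, LinearMap.smul_apply,
    apply_self_eq_zero_of_antisymm hR, hR (emb _) (pvec n), hR (qvec n) (emb _),
    hR (qvec n) (pvec n)]
  module

theorem bianchi_iff_witt {R : Mink n →ₗ[ℝ] Mink n →ₗ[ℝ] Module.End ℝ (Mink n)}
    (hR : ∀ x y, R x y = -R y x) :
    (∀ x y z, R x y z + R y z x + R z x y = 0) ↔
      (∀ W, R (pvec n) (qvec n) (emb W) =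
        R (emb W) (qvec n) (pvec n) + R (pvec n) (emb W) (qvec n)) ∧
      (∀ U W, R (emb U) (emb W) (pvec n) =
        R (pvec n) (emb W) (emb U) - R (pvec n) (emb U) (emb W)) ∧
      (∀ U W, R (emb U) (emb W) (qvec n) =
        R (emb U) (qvec n) (emb W) - R (emb W) (qvec n) (emb U)) ∧
      ∀ U W T, R (emb U) (emb W) (emb T) + R (emb W) (emb T) (emb U) +
        R (emb T) (emb U) (emb W) = 0 := by
  have hp (U) : R (emb U) (pvec n) = -R (pvec n) (emb U) := hR _ _
  have hq (U) : R (qvec n) (emb U) = -R (emb U) (qvec n) := hR _ _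
  constructor
  · intro h
    refine ⟨fun W => ?_, fun U W => ?_, fun U W => ?_, fun U W T => h _ _ _⟩
    · have := h (pvec n) (qvec n) (emb W)
      rw [hp, hq, LinearMap.neg_apply, LinearMap.neg_apply] at this
      linear_combination (norm := module) this
    · have := h (pvec n) (emb U) (emb W)
      rw [hp, LinearMap.neg_apply] at this
      linear_combination (norm := module) this
    · have := h (emb U) (emb W) (qvec n)
      rw [hq, LinearMap.neg_apply] at this
      linear_combination (norm := module) this
  · rintro ⟨hpq, hpe, heq, hee⟩ x y z
    have hexpand (F : Module.End ℝ (Mink n)) (w : Mink n) :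
        F w = w.1 • F (pvec n) + F (emb w.2.1) + w.2.2 • F (qvec n) := by
      conv_lhs => rw [eq_smul_pvec_add_emb_add_smul_qvec w, map_add, map_add, map_smul, map_smul]
    rw [hexpand (R x y), hexpand (R y z), hexpand (R z x), apply_eq_witt hR x y,
      apply_eq_witt hR y z, apply_eq_witt hR z x]
    simp only [LinearMap.add_apply, LinearMap.sub_apply, LinearMap.smul_apply, hpq, hpe, heq]
    linear_combination (norm := module) hee x.2.1 y.2.1 z.2.1

theorem forall_apply_mem_iff_witt {R : Mink n →ₗ[ℝ] Mink n →ₗ[ℝ] M}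
    (hR : ∀ x y, R x y = -R y x) (N : Submodule ℝ M) :
    (∀ x y, R x y ∈ N) ↔ R (pvec n) (qvec n) ∈ N ∧ (∀ W, R (pvec n) (emb W) ∈ N) ∧
      (∀ U W, R (emb U) (emb W) ∈ N) ∧ ∀ U, R (emb U) (qvec n) ∈ N := by
  refine ⟨fun h => ⟨h _ _, fun W => h _ _, fun U W => h _ _, fun U => h _ _⟩, ?_⟩
  rintro ⟨hpq, hpe, hee, heq⟩ x y
  rw [apply_eq_witt hR]
  exact add_mem (add_mem (add_mem (N.smul_mem _ hpq)
    (sub_mem (N.smul_mem _ (hpe _)) (N.smul_mem _ (hpe _)))) (hee _ _))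
    (sub_mem (N.smul_mem _ (heq _)) (N.smul_mem _ (heq _)))

/-- The bilinear map on Minkowski space with value `E` at `(p, q)`, `F W` at `(p, W)`, `G U W` at
`(U, W)` and `H U` at `(U, q)` for `U, W ∈ ℝⁿ`, antisymmetric whenever `G` is. -/
def wittBilin (E : M) (F : (Fin n → ℝ) →ₗ[ℝ] M) (G : (Fin n → ℝ) →ₗ[ℝ] (Fin n → ℝ) →ₗ[ℝ] M)
    (H : (Fin n → ℝ) →ₗ[ℝ] M) : Mink n →ₗ[ℝ] Mink n →ₗ[ℝ] M :=
  LinearMap.mk₂ ℝ (fun x y => (x.1 * y.2.2 - x.2.2 * y.1) • E +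
      (x.1 • F y.2.1 - y.1 • F x.2.1) + G x.2.1 y.2.1 + (y.2.2 • H x.2.1 - x.2.2 • H y.2.1))
    (fun x x' y => by
      simp only [Prod.fst_add, Prod.snd_add, map_add, LinearMap.add_apply]
      module)
    (fun c x y => by
      simp only [Prod.smul_fst, Prod.smul_snd, map_smul, LinearMap.smul_apply, smul_eq_mul]
      module)
    (fun x y y' => by
      simp only [Prod.fst_add, Prod.snd_add, map_add]
      module)
    (fun c x y => by
      simp only [Prod.smul_fst, Prod.smul_snd, map_smul, smul_eq_mul]
      module)

section

variable (E : M) (F : (Fin n → ℝ) →ₗ[ℝ] M) (G : (Fin n → ℝ) →ₗ[ℝ] (Fin n → ℝ) →ₗ[ℝ] M)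
  (H : (Fin n → ℝ) →ₗ[ℝ] M)

theorem wittBilin_apply (x y : Mink n) :
    wittBilin E F G H x y = (x.1 * y.2.2 - x.2.2 * y.1) • E +
      (x.1 • F y.2.1 - y.1 • F x.2.1) + G x.2.1 y.2.1 +
      (y.2.2 • H x.2.1 - x.2.2 • H y.2.1) := rfl

theorem wittBilin_pvec_qvec : wittBilin E F G H (pvec n) (qvec n) = E := by
  simp [wittBilin_apply, pvec, qvec]

theorem wittBilin_pvec_emb (W : Fin n → ℝ) : wittBilin E F G H (pvec n) (emb W) = F W := by
  simp [wittBilin_apply, pvec, emb]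

theorem wittBilin_emb_emb (U W : Fin n → ℝ) :
    wittBilin E F G H (emb U) (emb W) = G U W := by
  simp [wittBilin_apply, emb]

theorem wittBilin_emb_qvec (U : Fin n → ℝ) : wittBilin E F G H (emb U) (qvec n) = H U := by
  simp [wittBilin_apply, qvec, emb]

variable {G} in
theorem wittBilin_antisymm (hG : ∀ U W, G U W = -G W U) (x y : Mink n) :
    wittBilin E F G H x y = -wittBilin E F G H y x := by
  rw [wittBilin_apply, wittBilin_apply, hG x.2.1]
  module

end

end WittDecomposition

attribute [ext] CurvData

namespace CurvData

variable {n : ℕ} (d : CurvData n)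

theorem Lmap_eq (U W : Fin n → ℝ) :
    Lmap d U W = d.gam W • U + d.P W U - (d.gam U • W + d.P U W) := by
  rw [Lmap]
  abel

theorem Lmap_antisymm (U W : Fin n → ℝ) : Lmap d U W = -Lmap d W U := by
  rw [Lmap_eq, Lmap_eq, neg_sub]

variable {d} in
theorem dotE_Lmap_cyclic (hP : ∀ U, d.P U ∈ soE n) (U W T : Fin n → ℝ) :
    dotE n (Lmap d U W) T + dotE n (Lmap d W T) U + dotE n (Lmap d T U) W =
      -2 * (dotE n (d.P U W) T + dotE n (d.P W T) U + dotE n (d.P T U) W) := by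
  have hskew (x y z : Fin n → ℝ) : dotE n (d.P x y) z = -dotE n (d.P x z) y :=
    mem_soE_iff.mp (hP x) y z
  simp only [Lmap, map_sub, map_add, map_smul, LinearMap.sub_apply, LinearMap.add_apply,
    LinearMap.smul_apply, smul_eq_mul]
  rw [hskew U T W, hskew W U T, hskew T W U, (dotE_isSymm n).eq T U, (dotE_isSymm n).eq W U,
    (dotE_isSymm n).eq T W]
  ring

end CurvData

theorem ValidData.tau_eq {n : ℕ} {d : CurvData n} (hd : ValidData d) (U W : Fin n → ℝ) :
    d.tau U W = dotE n (d.A0 U) W := by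
  obtain ⟨-, -, -, -, -, -, -, -, htau⟩ := hd
  exact htau U W

namespace Matches

variable {n : ℕ} {R R' : Mink n →ₗ[ℝ] Mink n →ₗ[ℝ] Module.End ℝ (Mink n)} {d e : CurvData n}

theorem curv_eq (hR : ∀ x y, R x y = -R y x) (hR' : ∀ x y, R' x y = -R' y x)
    (h : Matches R d) (h' : Matches R' d) : R = R' := by
  obtain ⟨hpq, hpe, hee, heq⟩ := h
  obtain ⟨hpq', hpe', hee', heq'⟩ := h'
  refine LinearMap.ext₂ fun x y => ?_
  simp only [apply_eq_witt hR x y, apply_eq_witt hR' x y, hpq, hpe, hee, heq, hpq', hpe', hee',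
    heq']

theorem data_eq (hd : ∀ U W, d.tau U W = dotE n (d.A0 U) W)
    (he : ∀ U W, e.tau U W = dotE n (e.A0 U) W) (h : Matches R d) (h' : Matches R e) :
    d = e := by
  obtain ⟨hpq, hpe, hee, heq⟩ := h
  obtain ⟨hpq', hpe', hee', heq'⟩ := h'
  obtain ⟨hmu, hlam, hA0, hX0⟩ := coElem_inj.mp (hpq.symm.trans hpq')
  have hpe_eq (W) := coElem_inj.mp ((hpe W).symm.trans (hpe' W))
  have hee_eq (U W) := coElem_inj.mp ((hee U W).symm.trans (hee' U W))
  have heq_eq (U) := coElem_inj.mp ((heq U).symm.trans (heq' U))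
  exact CurvData.ext hmu hlam hX0 (dotE_injective n (LinearMap.ext fun W => (hpe_eq W).1))
    (LinearMap.ext fun U => (heq_eq U).1) (LinearMap.ext fun U => (heq_eq U).2.2.1)
    (LinearMap.ext fun U => (heq_eq U).2.2.2) hA0
    (LinearMap.ext₂ fun U W => (hee_eq U W).2.2.1)
    (LinearMap.ext₂ fun U W => by rw [hd, he, hA0])

theorem A0_mem_soE (hR : ∀ x y, R x y = -R y x) (h : Matches R d) : d.A0 ∈ soE n := by
  obtain ⟨-, -, hee, -⟩ := h
  rw [mem_soE_iff]
  intro U W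
  have hanti := hR (emb U) (emb W)
  rw [hee, hee, coElem_neg, coElem_inj] at hanti
  exact hanti.1

theorem S_antisymm (hR : ∀ x y, R x y = -R y x) (h : Matches R d) (U W : Fin n → ℝ) :
    d.S U W = -d.S W U := by
  obtain ⟨-, -, hee, -⟩ := h
  have hanti := hR (emb U) (emb W)
  rw [hee, hee, coElem_neg, coElem_inj] at hanti
  exact hanti.2.2.1

theorem forall_mem_coRp_iff (hR : ∀ x y, R x y = -R y x) (h : Matches R d) :
    (∀ x y, R x y ∈ coRp n) ↔ (∀ U W, d.S U W ∈ soE n) ∧ ∀ U, d.P U ∈ soE n := by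
  have hA0 := h.A0_mem_soE hR
  have hwedge (W : Fin n → ℝ) : wedge (dotE n) d.Z0 W ∈ soE n :=
    wedge_mem_soSet (dotE_isSymm n) d.Z0 W
  obtain ⟨hpq, hpe, hee, heq⟩ := h
  refine (forall_apply_mem_iff_witt hR (coRpSubmodule n)).trans ?_
  simp only [hpq, hpe, hee, heq, mem_coRpSubmodule, coElem_mem_coRp, hA0, hwedge, implies_true,
    true_and]

theorem bianchi_iff (hR : ∀ x y, R x y = -R y x) (h : Matches R d) (hP : ∀ U, d.P U ∈ soE n) :
    (∀ x y z, R x y z + R y z x + R z x y = 0) ↔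
      (∀ x y z, dotE n (d.P x y) z + dotE n (d.P y z) x + dotE n (d.P z x) y = 0) ∧
      (∀ x y, dotE n (d.K x) y = dotE n x (d.K y)) ∧
      ∀ x y z, (d.S x y z + dotE n (d.A0 x) y • z) + (d.S y z x + dotE n (d.A0 y) z • x) +
        (d.S z x y + dotE n (d.A0 z) x • y) = 0 := by
  have hA0 := mem_soE_iff.mp (h.A0_mem_soE hR)
  obtain ⟨hpq, hpe, hee, heq⟩ := h
  have hX0 (W : Fin n → ℝ) : dotE n d.X0 W = d.gam W + (dotE n W d.X0 - d.gam W) := by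
    rw [(dotE_isSymm n).eq W, add_sub_cancel]
  have hA0_eq (U W : Fin n → ℝ) : dotE n (d.A0 U) W + dotE n (d.A0 U) W =
      dotE n (-(d.A0 W + d.mu • W)) U - dotE n (-(d.A0 U + d.mu • U)) W := by
    simp only [map_neg, map_add, map_smul, LinearMap.neg_apply, LinearMap.add_apply,
      LinearMap.smul_apply, smul_eq_mul]
    rw [hA0 W U, (dotE_isSymm n).eq W U]
    ring
  have hK (U W : Fin n → ℝ) :
      dotE n (d.K U) W = dotE n (d.K W) U ↔ dotE n (d.K U) W = dotE n U (d.K W) := by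
    rw [(dotE_isSymm n).eq U]
  rw [bianchi_iff_witt hR]
  simp only [hpq, hpe, hee, heq, coElem_emb_eq_iff, coElem_pvec_eq_iff, coElem_qvec_eq_iff,
    coElem_emb_add_add_eq_zero_iff, ← hX0, ← hA0_eq, ← CurvData.Lmap_eq, hK,
    smul_add_wedge_comm (dotE_isSymm n) d.Z0, CurvData.dotE_Lmap_cyclic hP, mul_eq_zero,
    neg_eq_zero, OfNat.ofNat_ne_zero, false_or, forall_and, implies_true, true_and, and_true]
  tauto

theorem isCurv_iff_validData (hR : ∀ x y, R x y = -R y x) (h : Matches R d)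
    (htau : ∀ U W, d.tau U W = dotE n (d.A0 U) W) : IsCurv (coRp n) R ↔ ValidData d := by
  have hA0 := h.A0_mem_soE hR
  have htau_anti (U W : Fin n → ℝ) : d.tau U W = -d.tau W U := by
    rw [htau, htau, mem_soE_iff.mp hA0]
  rw [IsCurv, h.forall_mem_coRp_iff hR, ValidData]
  simp only [htau] at htau_anti ⊢
  constructor
  · rintro ⟨-, ⟨hS, hP⟩, hbianchi⟩
    obtain ⟨hcyc, hK, hSbianchi⟩ := (h.bianchi_iff hR hP).mp hbianchi
    exact ⟨hP, hcyc, hK, h.S_antisymm hR, hS, htau_anti, hSbianchi, hA0, fun _ _ => trivial⟩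
  · rintro ⟨hP, hcyc, hK, -, hS, -, hSbianchi, -, -⟩
    exact ⟨hR, ⟨hS, hP⟩, (h.bianchi_iff hR hP).mpr ⟨hcyc, hK, hSbianchi⟩⟩

end Matches

namespace CurvData

variable {n : ℕ}

/-- The linear map `W ↦ R(p, W)` prescribed by the data. -/
def pvecPart (d : CurvData n) : (Fin n → ℝ) →ₗ[ℝ] Module.End ℝ (Mink n) where
  toFun W := coElem (dotE n d.Z0 W) (dotE n d.Z0 W) (wedge (dotE n) d.Z0 W)
    (-(d.A0 W + d.mu • W))
  map_add' W W' := by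
    have hwedge := (wedgeRight (dotE n) d.Z0).map_add W W'
    have htrans : -(d.A0 (W + W') + d.mu • (W + W')) =
        -(d.A0 W + d.mu • W) + -(d.A0 W' + d.mu • W') := by
      rw [map_add]
      module
    rw [coElem_add, map_add, htrans]
    exact congrArg (coElem _ _ · _) hwedge
  map_smul' c W := by
    have hwedge := (wedgeRight (dotE n) d.Z0).map_smul c W
    have htrans : -(d.A0 (c • W) + d.mu • c • W) = c • -(d.A0 W + d.mu • W) := by
      rw [map_smul]
      module
    rw [RingHom.id_apply, coElem_smul, map_smul, htrans]
    exact congrArg (coElem _ _ · _) hwedge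

/-- The bilinear map `(U, W) ↦ R(U, W)` on `ℝⁿ` prescribed by the data. -/
def embPart (d : CurvData n) :
    (Fin n → ℝ) →ₗ[ℝ] (Fin n → ℝ) →ₗ[ℝ] Module.End ℝ (Mink n) :=
  LinearMap.mk₂ ℝ
    (fun U W => coElem (dotE n (d.A0 U) W) (dotE n (d.A0 U) W) (d.S U W) (Lmap d U W))
    (fun U U' W => by
      simp only [Lmap, map_add, LinearMap.add_apply, coElem_add]
      congr 1
      module)
    (fun c U W => by
      simp only [Lmap, map_smul, LinearMap.smul_apply, coElem_smul, smul_eq_mul]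
      congr 1
      module)
    (fun U W W' => by
      simp only [Lmap, map_add, LinearMap.add_apply, coElem_add]
      congr 1
      module)
    (fun c U W => by
      simp only [Lmap, map_smul, LinearMap.smul_apply, coElem_smul, smul_eq_mul]
      congr 1
      module)

/-- The linear map `U ↦ R(U, q)` prescribed by the data. -/
def qvecPart (d : CurvData n) : (Fin n → ℝ) →ₗ[ℝ] Module.End ℝ (Mink n) where
  toFun U := coElem (d.gam U) (dotE n U d.X0 - d.gam U) (d.P U) (d.K U)
  map_add' U U' := by
    simp only [map_add, LinearMap.add_apply, coElem_add]
    congr 1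
    ring
  map_smul' c U := by
    simp only [map_smul, LinearMap.smul_apply, smul_eq_mul, RingHom.id_apply, coElem_smul]
    congr 1
    ring

/-- The curvature tensor defined by the four equalities of the parametrization. -/
def toTensor (d : CurvData n) : Mink n →ₗ[ℝ] Mink n →ₗ[ℝ] Module.End ℝ (Mink n) :=
  wittBilin (coElem d.mu d.lam d.A0 d.X0) d.pvecPart d.embPart d.qvecPart

theorem matches_toTensor (d : CurvData n) : Matches d.toTensor d :=
  ⟨wittBilin_pvec_qvec _ _ _ _, wittBilin_pvec_emb _ _ _ _, wittBilin_emb_emb _ _ _ _,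
    wittBilin_emb_qvec _ _ _ _⟩

theorem toTensor_antisymm {d : CurvData n} (hd : ValidData d) (x y : Mink n) :
    d.toTensor x y = -d.toTensor y x := by
  obtain ⟨-, -, -, hS, -, -, -, hA0, -⟩ := hd
  refine wittBilin_antisymm _ _ _ (fun U W => ?_) x y
  change coElem _ _ _ _ = -coElem _ _ _ _
  rw [coElem_neg, mem_soE_iff.mp hA0 U, hS U, Lmap_antisymm]

/-- The data read off from a tensor `R` with values in `co(1,n+1)_{ℝp}`: `Z₀` represents the
functional `W ↦ b` of `R(p, W) = (b, a, A, X)`, and `τ` is defined through `A₀`. -/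
def ofTensor (R : Mink n →ₗ[ℝ] Mink n →ₗ[ℝ] Module.End ℝ (Mink n)) : CurvData n where
  mu := coScale n (R (pvec n) (qvec n))
  lam := coBoost n (R (pvec n) (qvec n))
  X0 := coTrans n (R (pvec n) (qvec n))
  Z0 := (dotProductEquiv ℝ (Fin n)).symm (coScale n ∘ₗ R (pvec n) ∘ₗ embₗ n)
  gam := coScale n ∘ₗ R.flip (qvec n) ∘ₗ embₗ n
  P := coRot n ∘ₗ R.flip (qvec n) ∘ₗ embₗ n
  K := coTrans n ∘ₗ R.flip (qvec n) ∘ₗ embₗ n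
  A0 := coRot n (R (pvec n) (qvec n))
  S := (R.compl₁₂ (embₗ n) (embₗ n)).compr₂ (coRot n)
  tau := dotE n ∘ₗ coRot n (R (pvec n) (qvec n))

end CurvData

namespace IsCurv

variable {n : ℕ} {R : Mink n →ₗ[ℝ] Mink n →ₗ[ℝ] Module.End ℝ (Mink n)}

theorem bianchi_pvec_qvec_emb (hR : IsCurv (coRp n) R) (W : Fin n → ℝ) :
    dotE n (coTrans n (R (pvec n) (qvec n))) W =
        coScale n (R (emb W) (qvec n)) + coBoost n (R (emb W) (qvec n)) ∧
      coTrans n (R (pvec n) (emb W)) =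
        -(coRot n (R (pvec n) (qvec n)) W + coScale n (R (pvec n) (qvec n)) • W) ∧
      coBoost n (R (pvec n) (emb W)) = coScale n (R (pvec n) (emb W)) := by
  obtain ⟨hanti, hmem, hbianchi⟩ := hR
  have h := ((bianchi_iff_witt hanti).mp hbianchi).1 W
  rwa [eq_coElem_of_mem_coRp (hmem (pvec n) (qvec n)),
    eq_coElem_of_mem_coRp (hmem (emb W) (qvec n)),
    eq_coElem_of_mem_coRp (hmem (pvec n) (emb W)), coElem_emb_eq_iff] at h

theorem bianchi_pvec_emb_emb (hR : IsCurv (coRp n) R) (U W : Fin n → ℝ) :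
    coScale n (R (emb U) (emb W)) + coBoost n (R (emb U) (emb W)) =
        dotE n (coTrans n (R (pvec n) (emb W))) U - dotE n (coTrans n (R (pvec n) (emb U))) W ∧
      coScale n (R (pvec n) (emb W)) • U + coRot n (R (pvec n) (emb W)) U =
        coScale n (R (pvec n) (emb U)) • W + coRot n (R (pvec n) (emb U)) W := by
  obtain ⟨hanti, hmem, hbianchi⟩ := hR
  have h := ((bianchi_iff_witt hanti).mp hbianchi).2.1 U W
  rwa [eq_coElem_of_mem_coRp (hmem (emb U) (emb W)),
    eq_coElem_of_mem_coRp (hmem (pvec n) (emb W)),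
    eq_coElem_of_mem_coRp (hmem (pvec n) (emb U)), coElem_pvec_eq_iff] at h

theorem bianchi_emb_emb_qvec (hR : IsCurv (coRp n) R) (U W : Fin n → ℝ) :
    dotE n (coTrans n (R (emb U) (qvec n))) W = dotE n (coTrans n (R (emb W) (qvec n))) U ∧
      coTrans n (R (emb U) (emb W)) =
        coScale n (R (emb W) (qvec n)) • U + coRot n (R (emb W) (qvec n)) U -
          (coScale n (R (emb U) (qvec n)) • W + coRot n (R (emb U) (qvec n)) W) ∧
      coBoost n (R (emb U) (emb W)) = coScale n (R (emb U) (emb W)) := by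
  obtain ⟨hanti, hmem, hbianchi⟩ := hR
  have h := ((bianchi_iff_witt hanti).mp hbianchi).2.2.1 U W
  rwa [eq_coElem_of_mem_coRp (hmem (emb U) (emb W)),
    eq_coElem_of_mem_coRp (hmem (emb U) (qvec n)),
    eq_coElem_of_mem_coRp (hmem (emb W) (qvec n)), coElem_qvec_eq_iff] at h

theorem coScale_emb_emb (hR : IsCurv (coRp n) R) (U W : Fin n → ℝ) :
    coScale n (R (emb U) (emb W)) = dotE n (coRot n (R (pvec n) (qvec n)) U) W := by
  have hA0 := mem_soE_iff.mp (coRot_mem_soE (hR.2.1 (pvec n) (qvec n))) W U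
  have h := (hR.bianchi_pvec_emb_emb U W).1
  rw [(hR.bianchi_emb_emb_qvec U W).2.2, (hR.bianchi_pvec_qvec_emb U).2.1,
    (hR.bianchi_pvec_qvec_emb W).2.1] at h
  simp only [map_neg, map_add, map_smul, LinearMap.neg_apply, LinearMap.add_apply,
    LinearMap.smul_apply, smul_eq_mul] at h
  linear_combination (1 / 2 : ℝ) * h - (1 / 2 : ℝ) * hA0 -
    (1 / 2 : ℝ) * coScale n (R (pvec n) (qvec n)) * (dotE_isSymm n).eq W U

-- By the Bianchi identity on `p, U, W`, the map `W ↦ rot R(p, W) - Z ∧ W` lies in the first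
-- prolongation of `so(n)`, which is zero.
theorem coRot_pvec_emb (hR : IsCurv (coRp n) R) {Z : Fin n → ℝ}
    (hZ : ∀ W, dotE n Z W = coScale n (R (pvec n) (emb W))) (W : Fin n → ℝ) :
    coRot n (R (pvec n) (emb W)) = wedge (dotE n) Z W := by
  let φ : (Fin n → ℝ) →ₗ[ℝ] Module.End ℝ (Fin n → ℝ) :=
    coRot n ∘ₗ R (pvec n) ∘ₗ embₗ n - wedgeRight (dotE n) Z
  have hso (U) : φ U ∈ soE n := mem_soSet_iff_mem_skewAdjointSubmodule.mpr <| sub_mem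
    (mem_soSet_iff_mem_skewAdjointSubmodule.mp (coRot_mem_soE (hR.2.1 (pvec n) (emb U))))
    (mem_soSet_iff_mem_skewAdjointSubmodule.mp (wedge_mem_soSet (dotE_isSymm n) Z U))
  have hsymm (U T : Fin n → ℝ) : φ U T = φ T U := by
    have hrot := (hR.bianchi_pvec_emb_emb U T).2
    rw [← hZ, ← hZ] at hrot
    have hwedge := smul_add_wedge_comm (dotE_isSymm n) Z U T
    change coRot n (R (pvec n) (emb U)) T - wedge (dotE n) Z U T =
      coRot n (R (pvec n) (emb T)) U - wedge (dotE n) Z T U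
    linear_combination (norm := module) -hrot - hwedge
  have hφ := eq_zero_of_mem_firstProlong_soSet (dotE_isSymm n) (dotE_separatingLeft n)
    (φ := φ) ⟨hso, hsymm⟩
  exact sub_eq_zero.mp (LinearMap.congr_fun hφ W)

theorem matches_ofTensor (hR : IsCurv (coRp n) R) : Matches R (CurvData.ofTensor R) := by
  have hZ0 (W : Fin n → ℝ) :
      dotE n (CurvData.ofTensor R).Z0 W = coScale n (R (pvec n) (emb W)) :=
    LinearMap.congr_fun (dotE_dotProductEquiv_symm _) W
  have hcoElem (x y : Mink n) := eq_coElem_of_mem_coRp (hR.2.1 x y)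
  refine ⟨hcoElem _ _, fun W => ?_, fun U W => ?_, fun U => ?_⟩
  · obtain ⟨-, htrans, hboost⟩ := hR.bianchi_pvec_qvec_emb W
    rw [hcoElem (pvec n) (emb W), hboost, htrans, hR.coRot_pvec_emb hZ0, hZ0]
    rfl
  · obtain ⟨-, htrans, hboost⟩ := hR.bianchi_emb_emb_qvec U W
    have hL : coTrans n (R (emb U) (emb W)) = Lmap (CurvData.ofTensor R) U W := by
      rw [htrans, CurvData.Lmap_eq]
      rfl
    rw [hcoElem (emb U) (emb W), hboost, hR.coScale_emb_emb, hL]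
    rfl
  · have hboost : coBoost n (R (emb U) (qvec n)) =
        dotE n U (coTrans n (R (pvec n) (qvec n))) - coScale n (R (emb U) (qvec n)) := by
      rw [(dotE_isSymm n).eq U, (hR.bianchi_pvec_qvec_emb U).1, add_sub_cancel_left]
    rw [hcoElem (emb U) (qvec n), hboost]
    rfl

end IsCurv

/-- Every algebraic curvature tensor of type `co(1,n+1)_{ℝp}` is uniquely
determined by data `(μ, λ, X₀, Z₀, γ, P, K, A₀, S, τ)` via the four defining
equalities; conversely, every valid collection of data defines a unique such
curvature tensor.  The correspondence is a (linear) bijection. -/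
theorem curvature_coRp_parametrization (n : ℕ) :
    (∀ R : Mink n →ₗ[ℝ] Mink n →ₗ[ℝ] Module.End ℝ (Mink n),
      IsCurv (coRp n) R → ∃! d : CurvData n, ValidData d ∧ Matches R d) ∧
    (∀ d : CurvData n, ValidData d →
      ∃! R : Mink n →ₗ[ℝ] Mink n →ₗ[ℝ] Module.End ℝ (Mink n),
        IsCurv (coRp n) R ∧ Matches R d) := by
  refine ⟨fun R hR => ?_, fun d hd => ?_⟩
  · have hmatch := hR.matches_ofTensor
    have hvalid := (hmatch.isCurv_iff_validData hR.1 fun _ _ => rfl).mp hR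
    refine ⟨CurvData.ofTensor R, ⟨hvalid, hmatch⟩, fun e ⟨he, hmatch'⟩ => ?_⟩
    exact Matches.data_eq he.tau_eq hvalid.tau_eq hmatch' hmatch
  · have hanti := CurvData.toTensor_antisymm hd
    have hmatch := d.matches_toTensor
    have hcurv := (hmatch.isCurv_iff_validData hanti hd.tau_eq).mpr hd
    exact ⟨d.toTensor, ⟨hcurv, hmatch⟩, fun R ⟨hR, hmatch'⟩ =>
      Matches.curv_eq hR.1 hanti hmatch' hmatch⟩

end Weyl
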